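/- arXiv:1806.02214 — 3 statements merged into one kernel-verified Lean document; each statement's English description precedes it below -/
import Mathlib

section
/- Let E be a Banach space, T > 0, and let K be a Volterra kernel on [0,T] satisfying Condition (A) with exponent α ∈ [0, 1/4) and constant C_K. Let ψ: [0,T]² → E be strongly λ-Hölder bi-continuous with constant C_ψ and λ > α. Then for all (u,v) ∈ (0,T)², the double integral B(ψ)(u,v) := ∫_v^T ∫_u^T ψ(u,r₁;v,r₂) (∂K(r₁,u)/∂r₁) (∂K(r₂,v)/∂r₂) dr₁ dr₂ converges absolutely and satisfies ‖B(ψ)(u,v)‖_E ≤ C_ψ C_K² (λ−α)^(−2) (T−u)^(λ−α) (T−v)^(λ−α). -/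
/-!
On the rectangle `(u, T] × (v, T]` the Hölder bound on the rectangular increment absorbs the
non-integrable singularities `(r₁ - u) ^ (-(α + 1))` and `(r₂ - v) ^ (-(α + 1))` of the kernel
derivatives, so the integrand is dominated by
`Cψ * CK ^ 2 * ((r₁ - u) ^ (lam - α - 1) * (r₂ - v) ^ (lam - α - 1))`. As `α < lam`, this majorant
is integrable, and its integral is exactly the claimed bound. The integrand is measurable because
`K' · u` and `K' · v` are derivatives, and `(r₁, r₂) ↦ rectInc ψ u r₁ v r₂` inherits continuity
from the rectangular Hölder bound because rectangular increments are additive.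
-/

open MeasureTheory Set

noncomputable section

namespace YS

variable {E : Type*} [NormedAddCommGroup E] [NormedSpace ℝ E]

/-- A Volterra kernel: a measurable `K : ℝ² → ℝ` with `K t s = 0` whenever `s ≥ t`. -/
def IsVolterraKernel (K : ℝ → ℝ → ℝ) : Prop :=
  Measurable (Function.uncurry K) ∧ ∀ t s : ℝ, t ≤ s → K t s = 0

/-- Condition (A) with exponent `α` and constant `C`; here `K' t s` denotes the partial
derivative `∂K(t,s)/∂t`, whose existence is part of the condition. -/
def CondA (T α C : ℝ) (K K' : ℝ → ℝ → ℝ) : Prop :=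
  (∀ s t : ℝ, 0 < s → s < t → t ≤ T → |K t s| ≤ C * s ^ (-α) * (t - s) ^ (-α)) ∧
  ∀ s t : ℝ, 0 < s → s < t → t ≤ T →
    HasDerivAt (fun r => K r s) (K' t s) t ∧ |K' t s| ≤ C * (t - s) ^ (-(α + 1))

/-- The operator `𝒦*`:  `(𝒦*φ)(s) = φ(s)K(T,s) + ∫_s^T [φ(r) − φ(s)] ∂K(r,s)/∂r dr`. -/
def Kstar (T : ℝ) (K K' : ℝ → ℝ → ℝ) (φ : ℝ → E) (s : ℝ) : E :=
  K T s • φ s + ∫ r in s..T, K' r s • (φ r - φ s)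

/-- The operator `A^K`. -/
def AK (T : ℝ) (K' : ℝ → ℝ → ℝ) (φ : ℝ → E) (s : ℝ) : E :=
  ∫ r in s..T, K' r s • (φ r - φ s)

/-- Rectangular increment `f(u₁,u₂;v₁,v₂)`. -/
def rectInc (ψ : ℝ → ℝ → E) (u₁ u₂ v₁ v₂ : ℝ) : E :=
  ψ u₁ v₁ + ψ u₂ v₂ - ψ u₁ v₂ - ψ u₂ v₁

/-- The operator `B^K`. -/
def BK (T : ℝ) (K' : ℝ → ℝ → ℝ) (ψ : ℝ → ℝ → E) (u v : ℝ) : E :=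
  ∫ r₂ in v..T, ∫ r₁ in u..T, (K' r₁ u * K' r₂ v) • rectInc ψ u r₁ v r₂

/-- The operator `𝒦* ⊗ 𝒦*`. -/
def KstarT (T : ℝ) (K K' : ℝ → ℝ → ℝ) (ψ : ℝ → ℝ → E) (u v : ℝ) : E :=
  (K T u * K T v) • ψ u v + K T v • AK T K' (fun x => ψ x v) u +
    K T u • AK T K' (fun y => ψ u y) v + BK T K' ψ u v

/-- A partition `0 = s₀ < s₁ < ⋯ < s_n = T` of `[0,T]`. -/
structure Partition (T : ℝ) where
  n : ℕ
  pts : ℕ → ℝ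
  n_pos : 0 < n
  first : pts 0 = 0
  last : pts n = T
  lt : ∀ i < n, pts i < pts (i + 1)

/-- Mesh of a partition: the largest increment. -/
def Partition.mesh {T : ℝ} (P : Partition T) : ℝ :=
  (Finset.range P.n).sup' (Finset.nonempty_range_iff.mpr P.n_pos.ne')
    fun i => P.pts (i + 1) - P.pts i

/-- One-dimensional step approximation `φ^π`. -/
def step1 {T : ℝ} (P : Partition T) (φ : ℝ → E) (s : ℝ) : E :=
  ∑ i ∈ Finset.range P.n,
    (Set.Ico (P.pts i) (P.pts (i + 1))).indicator (fun _ => φ (P.pts i)) s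

/-- Two-dimensional step approximation `ψ^π` for the grid partition `P × Q`. -/
def step2 {T : ℝ} (P Q : Partition T) (ψ : ℝ → ℝ → E) (u v : ℝ) : E :=
  ∑ i ∈ Finset.range P.n, ∑ j ∈ Finset.range Q.n,
    ((Set.Ico (P.pts i) (P.pts (i + 1))) ×ˢ (Set.Ico (Q.pts j) (Q.pts (j + 1)))).indicator
      (fun _ => ψ (P.pts i) (Q.pts j)) (u, v)

/-- `λ`-Hölder continuity on `[0,T]` with constant `C`. -/
def IsHolderWith (T lam C : ℝ) (φ : ℝ → E) : Prop :=
  ∀ t₁ ∈ Icc (0:ℝ) T, ∀ t₂ ∈ Icc (0:ℝ) T, ‖φ t₁ - φ t₂‖ ≤ C * |t₁ - t₂| ^ lam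

/-- `λ`-Hölder continuity on `[0,T]`. -/
def IsHolder (T lam : ℝ) (φ : ℝ → E) : Prop := ∃ C : ℝ, IsHolderWith T lam C φ

/-- `λ`-Hölder bi-continuity with constant `C`. -/
def IsHolderBiWith (T lam C : ℝ) (ψ : ℝ → ℝ → E) : Prop :=
  (∀ u₁ ∈ Icc (0:ℝ) T, ∀ u₂ ∈ Icc (0:ℝ) T, ∀ v ∈ Icc (0:ℝ) T,
      ‖ψ u₂ v - ψ u₁ v‖ ≤ C * |u₂ - u₁| ^ lam) ∧
  ∀ u ∈ Icc (0:ℝ) T, ∀ v₁ ∈ Icc (0:ℝ) T, ∀ v₂ ∈ Icc (0:ℝ) T,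
      ‖ψ u v₂ - ψ u v₁‖ ≤ C * |v₂ - v₁| ^ lam

/-- `λ`-Hölder bi-continuity. -/
def IsHolderBi (T lam : ℝ) (ψ : ℝ → ℝ → E) : Prop := ∃ C : ℝ, IsHolderBiWith T lam C ψ

/-- Strong `λ`-Hölder bi-continuity with constant `C`. -/
def IsStrongHolderBiWith (T lam C : ℝ) (ψ : ℝ → ℝ → E) : Prop :=
  IsHolderBiWith T lam C ψ ∧
  ∀ u₁ ∈ Icc (0:ℝ) T, ∀ u₂ ∈ Icc (0:ℝ) T, ∀ v₁ ∈ Icc (0:ℝ) T, ∀ v₂ ∈ Icc (0:ℝ) T,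
    ‖rectInc ψ u₁ u₂ v₁ v₂‖ ≤ C * |u₂ - u₁| ^ lam * |v₂ - v₁| ^ lam

/-- Strong `λ`-Hölder bi-continuity. -/
def IsStrongHolderBi (T lam : ℝ) (ψ : ℝ → ℝ → E) : Prop :=
  ∃ C : ℝ, IsStrongHolderBiWith T lam C ψ

/-- The covariance function `R(s,t) = ∫_0^{s∧t} K(t,r)K(s,r) dr` of the Volterra process. -/
def covR (K : ℝ → ℝ → ℝ) (s t : ℝ) : ℝ := ∫ r in (0:ℝ)..(min s t), K t r * K s r

/-- The 2D Riemann–Stieltjes sum of `f` against `g` over the grid partition `P × Q`. -/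
def RSsum {T : ℝ} (P Q : Partition T) (f g : ℝ → ℝ → ℝ) : ℝ :=
  ∑ i ∈ Finset.range P.n, ∑ j ∈ Finset.range Q.n,
    f (P.pts i) (Q.pts j) *
      rectInc g (P.pts i) (P.pts (i + 1)) (Q.pts j) (Q.pts (j + 1))

/-- The rectangular part of strong `λ`-Hölder bi-continuity with constant `C`: the Hölder bound on
the rectangular increments over `[0,T]²`. -/
def IsRectHolderWith (T lam C : ℝ) (ψ : ℝ → ℝ → E) : Prop :=
  ∀ u₁ ∈ Icc (0:ℝ) T, ∀ u₂ ∈ Icc (0:ℝ) T, ∀ v₁ ∈ Icc (0:ℝ) T, ∀ v₂ ∈ Icc (0:ℝ) T,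
    ‖rectInc ψ u₁ u₂ v₁ v₂‖ ≤ C * |u₂ - u₁| ^ lam * |v₂ - v₁| ^ lam

/-- The integrand of `BK`, as a function on the plane. -/
def integrandBK (K' : ℝ → ℝ → ℝ) (ψ : ℝ → ℝ → E) (u v : ℝ) (p : ℝ × ℝ) : E :=
  (K' p.1 u * K' p.2 v) • rectInc ψ u p.1 v p.2

theorem integrableOn_sub_rpow {r : ℝ} (hr : -1 < r) (a b : ℝ) :
    IntegrableOn (fun x : ℝ => (x - a) ^ r) (Ioc a b) := by
  have h := (intervalIntegral.intervalIntegrable_rpow' (a := 0) (b := b - a) hr).comp_sub_right a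
  simp only [zero_add, sub_add_cancel] at h
  exact h.1

theorem setIntegral_sub_rpow {r a b : ℝ} (hr : -1 < r) (hab : a ≤ b) :
    ∫ x in Ioc a b, (x - a) ^ r = (b - a) ^ (r + 1) / (r + 1) := by
  rw [← intervalIntegral.integral_of_le hab,
    intervalIntegral.integral_comp_sub_right (fun x : ℝ => x ^ r) a, integral_rpow (Or.inl hr),
    sub_self, Real.zero_rpow (by linarith), sub_zero]

theorem integrableOn_sub_rpow_mul_sub_rpow {r s : ℝ} (hr : -1 < r) (hs : -1 < s) (a b c d : ℝ) :
    IntegrableOn (fun p : ℝ × ℝ => (p.1 - a) ^ r * (p.2 - c) ^ s) (Ioc a b ×ˢ Ioc c d) := by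
  rw [IntegrableOn, Measure.volume_eq_prod, ← Measure.prod_restrict]
  exact (integrableOn_sub_rpow hr a b).mul_prod (integrableOn_sub_rpow hs c d)

theorem setIntegral_sub_rpow_mul_sub_rpow {r s a b c d : ℝ} (hr : -1 < r) (hs : -1 < s)
    (hab : a ≤ b) (hcd : c ≤ d) :
    ∫ p in Ioc a b ×ˢ Ioc c d, (p.1 - a) ^ r * (p.2 - c) ^ s =
      (b - a) ^ (r + 1) / (r + 1) * ((d - c) ^ (s + 1) / (s + 1)) := by
  rw [Measure.volume_eq_prod,
    setIntegral_prod_mul (fun x : ℝ => (x - a) ^ r) (fun y : ℝ => (y - c) ^ s),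
    setIntegral_sub_rpow hr hab, setIntegral_sub_rpow hs hcd]

theorem aestronglyMeasurable_of_hasDerivAt {F : Type*} [NormedAddCommGroup F] [NormedSpace ℝ F]
    [CompleteSpace F] {f f' : ℝ → F} {s : Set ℝ} {μ : Measure ℝ} (hs : MeasurableSet s)
    (hf : ∀ x ∈ s, HasDerivAt f (f' x) x) : AEStronglyMeasurable f' (μ.restrict s) :=
  (aestronglyMeasurable_deriv f _).congr <|
    ae_restrict_of_forall_mem hs fun x hx => (hf x hx).deriv

theorem rectInc_sub_rectInc {F : Type*} [NormedAddCommGroup F] (ψ : ℝ → ℝ → F)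
    (u v x₁ x₂ y₁ y₂ : ℝ) :
    rectInc ψ u x₂ v y₂ - rectInc ψ u x₁ v y₁ =
      rectInc ψ x₁ x₂ v y₂ + rectInc ψ u x₁ y₁ y₂ := by
  simp only [rectInc]
  abel

theorem IsRectHolderWith.continuousOn_rectInc {F : Type*} [NormedAddCommGroup F]
    {T lam C u v : ℝ} {ψ : ℝ → ℝ → F}
    (hψ : IsRectHolderWith T lam C ψ) (hlam : 0 < lam) (hu : u ∈ Icc 0 T) (hv : v ∈ Icc 0 T) :
    ContinuousOn (fun p : ℝ × ℝ => rectInc ψ u p.1 v p.2) (Icc 0 T ×ˢ Icc 0 T) := by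
  rintro ⟨x, y⟩ ⟨hx, hy⟩
  let modulus : ℝ × ℝ → ℝ := fun q =>
    C * |q.1 - x| ^ lam * |q.2 - v| ^ lam + C * |x - u| ^ lam * |q.2 - y| ^ lam
  have modulus_continuous : Continuous modulus := by
    have := hlam.le
    fun_prop (disch := assumption)
  have modulus_self : modulus (x, y) = 0 := by
    simp [modulus, Real.zero_rpow hlam.ne']
  refine tendsto_iff_norm_sub_tendsto_zero.2 <|
    squeeze_zero' (.of_forall fun _ => norm_nonneg _) ?_
      ((modulus_continuous.tendsto' _ _ modulus_self).mono_left nhdsWithin_le_nhds)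
  filter_upwards [self_mem_nhdsWithin] with q hq
  calc ‖rectInc ψ u q.1 v q.2 - rectInc ψ u x v y‖
      = ‖rectInc ψ x q.1 v q.2 + rectInc ψ u x y q.2‖ := by rw [rectInc_sub_rectInc]
    _ ≤ modulus q :=
        norm_add_le_of_le (hψ x hx q.1 hq.1 v hv q.2 hq.2) (hψ u hu x hx y hy q.2 hq.2)

section IntegrandBK

variable {T α lam CK Cψ u v : ℝ} {K K' : ℝ → ℝ → ℝ} {ψ : ℝ → ℝ → E}

theorem aestronglyMeasurable_integrandBK (hlam : 0 < lam) (hψ : IsRectHolderWith T lam Cψ ψ)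
    (hu : u ∈ Icc 0 T) (hv : v ∈ Icc 0 T)
    (hKu : ∀ x ∈ Ioc u T, HasDerivAt (fun r => K r u) (K' x u) x)
    (hKv : ∀ y ∈ Ioc v T, HasDerivAt (fun r => K r v) (K' y v) y) :
    AEStronglyMeasurable (integrandBK K' ψ u v) (volume.restrict (Ioc u T ×ˢ Ioc v T)) := by
  have rect_subset : Ioc u T ×ˢ Ioc v T ⊆ Icc 0 T ×ˢ Icc 0 T :=
    prod_mono (Ioc_subset_Icc_self.trans (Icc_subset_Icc_left hu.1))
      (Ioc_subset_Icc_self.trans (Icc_subset_Icc_left hv.1))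
  have rectInc_meas : AEStronglyMeasurable (fun p : ℝ × ℝ => rectInc ψ u p.1 v p.2)
      (volume.restrict (Ioc u T ×ˢ Ioc v T)) :=
    ((hψ.continuousOn_rectInc hlam hu hv).mono rect_subset).aestronglyMeasurable
      (measurableSet_Ioc.prod measurableSet_Ioc)
  rw [Measure.volume_eq_prod, ← Measure.prod_restrict] at rectInc_meas ⊢
  exact ((aestronglyMeasurable_of_hasDerivAt measurableSet_Ioc hKu).comp_fst.mul
    (aestronglyMeasurable_of_hasDerivAt measurableSet_Ioc hKv).comp_snd).smul rectInc_meas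

theorem norm_integrandBK_le {p : ℝ × ℝ} (hu : u < p.1) (hv : v < p.2)
    (hKu : |K' p.1 u| ≤ CK * (p.1 - u) ^ (-(α + 1)))
    (hKv : |K' p.2 v| ≤ CK * (p.2 - v) ^ (-(α + 1)))
    (hψ : ‖rectInc ψ u p.1 v p.2‖ ≤ Cψ * |p.1 - u| ^ lam * |p.2 - v| ^ lam) :
    ‖integrandBK K' ψ u v p‖ ≤
      Cψ * CK ^ 2 * ((p.1 - u) ^ (lam - α - 1) * (p.2 - v) ^ (lam - α - 1)) := by
  have rpow_split {z : ℝ} (hz : 0 < z) : z ^ (lam - α - 1) = z ^ (-(α + 1)) * z ^ lam := by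
    rw [← Real.rpow_add hz]
    ring_nf
  have hu' := sub_pos.2 hu
  have hv' := sub_pos.2 hv
  rw [abs_of_pos hu', abs_of_pos hv'] at hψ
  have kernel_le := mul_le_mul hKu hKv (abs_nonneg _) ((abs_nonneg _).trans hKu)
  calc ‖integrandBK K' ψ u v p‖
      = |K' p.1 u| * |K' p.2 v| * ‖rectInc ψ u p.1 v p.2‖ := by
        rw [integrandBK, norm_smul, Real.norm_eq_abs, abs_mul]
    _ ≤ CK * (p.1 - u) ^ (-(α + 1)) * (CK * (p.2 - v) ^ (-(α + 1))) *
          (Cψ * (p.1 - u) ^ lam * (p.2 - v) ^ lam) :=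
        mul_le_mul kernel_le hψ (norm_nonneg _)
          ((mul_nonneg (abs_nonneg _) (abs_nonneg _)).trans kernel_le)
    _ = Cψ * CK ^ 2 * ((p.1 - u) ^ (lam - α - 1) * (p.2 - v) ^ (lam - α - 1)) := by
        rw [rpow_split hu', rpow_split hv']
        ring

theorem BK_eq_setIntegral (hu : u ≤ T) (hv : v ≤ T)
    (h : IntegrableOn (integrandBK K' ψ u v) (Ioc u T ×ˢ Ioc v T)) :
    BK T K' ψ u v = ∫ p in Ioc u T ×ˢ Ioc v T, integrandBK K' ψ u v p := by
  rw [IntegrableOn, Measure.volume_eq_prod, ← Measure.prod_restrict] at h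
  rw [Measure.volume_eq_prod, ← Measure.prod_restrict, integral_prod_symm _ h, BK,
    intervalIntegral.integral_of_le hv]
  simp only [intervalIntegral.integral_of_le hu, integrandBK]

theorem BK_bound_general [CompleteSpace E] (hlam : 0 < lam) (hαlam : α < lam)
    (hK : ∀ s t : ℝ, 0 < s → s < t → t ≤ T →
      HasDerivAt (fun r => K r s) (K' t s) t ∧ |K' t s| ≤ CK * (t - s) ^ (-(α + 1)))
    (hψ : IsRectHolderWith T lam Cψ ψ) (hu : u ∈ Ioo 0 T) (hv : v ∈ Ioo 0 T) :
    IntegrableOn (integrandBK K' ψ u v) (Ioc u T ×ˢ Ioc v T) ∧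
      ‖BK T K' ψ u v‖ ≤
        Cψ * CK ^ 2 * ((lam - α) ^ 2)⁻¹ * (T - u) ^ (lam - α) * (T - v) ^ (lam - α) := by
  have hexp : -1 < lam - α - 1 := by linarith
  have hu' := Ioo_subset_Icc_self hu
  have hv' := Ioo_subset_Icc_self hv
  have hKu x (hx : x ∈ Ioc u T) := hK u x hu.1 hx.1 hx.2
  have hKv y (hy : y ∈ Ioc v T) := hK v y hv.1 hy.1 hy.2
  have le_majorant : ∀ᵐ p ∂volume.restrict (Ioc u T ×ˢ Ioc v T), ‖integrandBK K' ψ u v p‖ ≤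
      Cψ * CK ^ 2 * ((p.1 - u) ^ (lam - α - 1) * (p.2 - v) ^ (lam - α - 1)) :=
    ae_restrict_of_forall_mem (measurableSet_Ioc.prod measurableSet_Ioc) fun p hp =>
      norm_integrandBK_le hp.1.1 hp.2.1 (hKu _ hp.1).2 (hKv _ hp.2).2 <|
        hψ u hu' p.1 ⟨(hu.1.trans hp.1.1).le, hp.1.2⟩ v hv' p.2 ⟨(hv.1.trans hp.2.1).le, hp.2.2⟩
  have majorant_integrable :=
    (integrableOn_sub_rpow_mul_sub_rpow hexp hexp u T v T).const_mul (Cψ * CK ^ 2)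
  have integrable := majorant_integrable.mono'
    (aestronglyMeasurable_integrandBK hlam hψ hu' hv' (fun x hx => (hKu x hx).1)
      fun y hy => (hKv y hy).1) le_majorant
  refine ⟨integrable, ?_⟩
  rw [BK_eq_setIntegral hu.2.le hv.2.le integrable]
  refine (norm_integral_le_of_norm_le majorant_integrable le_majorant).trans_eq ?_
  rw [integral_const_mul, setIntegral_sub_rpow_mul_sub_rpow hexp hexp hu.2.le hv.2.le,
    sub_add_cancel, ← inv_pow]
  ring

end IntegrandBK

/-- absolute convergence of the double integral defining `B^K(ψ)(u,v)`
and the bound `‖B^K(ψ)(u,v)‖ ≤ C_ψ C_K² (λ−α)⁻² (T−u)^{λ−α} (T−v)^{λ−α}`. -/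
theorem BK_bound {E : Type*} [NormedAddCommGroup E] [NormedSpace ℝ E] [CompleteSpace E]
    (T α lam CK Cψ : ℝ) (hT : 0 < T) (hα : 0 ≤ α) (hα' : α < 1 / 4)
    (K K' : ℝ → ℝ → ℝ) (hK : IsVolterraKernel K) (hA : CondA T α CK K K')
    (ψ : ℝ → ℝ → E) (hlam : 0 < lam) (hlam' : lam ≤ 1)
    (hψ : IsStrongHolderBiWith T lam Cψ ψ) (hαlam : α < lam) :
    ∀ u ∈ Ioo (0:ℝ) T, ∀ v ∈ Ioo (0:ℝ) T,
      (∫⁻ p in (Ioc u T) ×ˢ (Ioc v T),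
          (‖(K' p.1 u * K' p.2 v) • rectInc ψ u p.1 v p.2‖₊ : ENNReal)) < ⊤ ∧
      ‖BK T K' ψ u v‖ ≤
        Cψ * CK ^ 2 * ((lam - α) ^ 2)⁻¹ * (T - u) ^ (lam - α) * (T - v) ^ (lam - α) := by
  intro u hu v hv
  obtain ⟨integrable, norm_le⟩ := BK_bound_general hlam hαlam hA.2 hψ.2 hu hv
  exact ⟨integrable.hasFiniteIntegral, norm_le⟩

end YS
end
end

section
/- Let E be a Banach space, T > 0, and let K be a Volterra kernel on [0,T] satisfying Condition (A) with exponent α ∈ [0, 1/4). If φ: [0,T] → E is λ-Hölder continuous with λ > α, then for every s ∈ (0,T) the integral ∫_s^T [φ(r) − φ(s)] (∂K(r,s)/∂r) dr converges absolutely (so K*φ is well-defined on (0,T)), and moreover ∫_0^T ‖(K*φ)(s)‖_E² ds < ∞, i.e., K*φ ∈ L²([0,T]; E). -/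
open MeasureTheory Set

noncomputable section

namespace YS

variable {E : Type*} [NormedAddCommGroup E] [NormedSpace ℝ E]

/-!
On `(0, T)` the first term of `𝒦*φ` is bounded by a multiple of `s ^ (-α) * (T - s) ^ (-α)`, whose
`p`-th power has a singularity of order `α * p` at each endpoint, so it lies in `L^p` as soon as
`α * p < 1`. In the second term the Hölder bound lowers the singularity of `∂K(r,s)/∂r` at `r = s`
from order `α + 1` to order `1 - (lam - α) < 1`; hence the integral converges and is bounded
uniformly in `s`. Joint measurability of `∂K(r,s)/∂r` holds because it is a limit of difference
quotients.
-/

lemma intervalIntegrable_sub_rpow {u : ℝ} (hu : -1 < u) (a b c : ℝ) :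
    IntervalIntegrable (fun x : ℝ => (x - c) ^ u) volume a b := by
  simpa only [sub_add_cancel] using
    (intervalIntegral.intervalIntegrable_rpow' (a := a - c) (b := b - c) hu).comp_sub_right c

lemma intervalIntegrable_const_sub_rpow {u : ℝ} (hu : -1 < u) (a b c : ℝ) :
    IntervalIntegrable (fun x : ℝ => (c - x) ^ u) volume a b := by
  simpa only [sub_sub_cancel] using
    (intervalIntegral.intervalIntegrable_rpow' (a := c - a) (b := c - b) hu).comp_sub_left c

lemma intervalIntegrable_sub_rpow_mul_sub_rpow {a b u v : ℝ} (hu : -1 < u) (hv : -1 < v)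
    (hab : a < b) :
    IntervalIntegrable (fun x => (x - a) ^ u * (b - x) ^ v) volume a b := by
  obtain ⟨m, ham, hmb⟩ := exists_between hab
  have left : IntervalIntegrable (fun x => (x - a) ^ u * (b - x) ^ v) volume a m := by
    refine (intervalIntegrable_sub_rpow hu a m a).mul_continuousOn ?_
    refine ContinuousOn.rpow_const (by fun_prop) fun x hx => Or.inl ?_
    rw [uIcc_of_le ham.le] at hx
    exact (sub_pos.2 (hx.2.trans_lt hmb)).ne'
  have right : IntervalIntegrable (fun x => (x - a) ^ u * (b - x) ^ v) volume m b := by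
    refine (intervalIntegrable_const_sub_rpow hv m b b).continuousOn_mul ?_
    refine ContinuousOn.rpow_const (by fun_prop) fun x hx => Or.inl ?_
    rw [uIcc_of_le hmb.le] at hx
    exact (sub_pos.2 (ham.trans_le hx.1)).ne'
  exact left.trans right

lemma memLp_sub_rpow_mul_sub_rpow {a b u v : ℝ} {p : ENNReal} (hp : p ≠ ⊤)
    (hu : -1 < u * p.toReal) (hv : -1 < v * p.toReal) (hab : a < b) :
    MemLp (fun x => (x - a) ^ u * (b - x) ^ v) p (volume.restrict (Ioo a b)) := by
  have hmeas : AEStronglyMeasurable (fun x => (x - a) ^ u * (b - x) ^ v)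
      (volume.restrict (Ioo a b)) := by
    fun_prop
  rcases eq_or_ne p 0 with rfl | hp0
  · exact memLp_zero_iff_aestronglyMeasurable.2 hmeas
  rw [← integrable_norm_rpow_iff hmeas hp0 hp]
  have hint := (intervalIntegrable_iff_integrableOn_Ioo_of_le hab.le).1
    (intervalIntegrable_sub_rpow_mul_sub_rpow hu hv hab)
  refine IntegrableOn.congr_fun hint (fun x hx => ?_) measurableSet_Ioo
  have hxa : 0 ≤ x - a := sub_nonneg.2 hx.1.le
  have hxb : 0 ≤ b - x := sub_nonneg.2 hx.2.le
  have hxa' := Real.rpow_nonneg hxa u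
  have hxb' := Real.rpow_nonneg hxb v
  rw [Real.norm_of_nonneg (mul_nonneg hxa' hxb'), Real.mul_rpow hxa' hxb', ← Real.rpow_mul hxa,
    ← Real.rpow_mul hxb]

lemma integrableOn_of_norm_le_sub_rpow {F : Type*} [NormedAddCommGroup F] {f : ℝ → F}
    {a b c u : ℝ} (hu : -1 < u) (hf : AEStronglyMeasurable f (volume.restrict (Ioc a b)))
    (hbound : ∀ r ∈ Ioc a b, ‖f r‖ ≤ c * (r - a) ^ u) : IntegrableOn f (Ioc a b) :=
  ((intervalIntegrable_sub_rpow hu a b a).const_mul c).1.mono' hf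
    (ae_restrict_of_forall_mem measurableSet_Ioc hbound)

lemma norm_integral_le_of_norm_le_sub_rpow {f : ℝ → E} {a b c u : ℝ} (hu : -1 < u) (hab : a ≤ b)
    (hbound : ∀ r ∈ Ioc a b, ‖f r‖ ≤ c * (r - a) ^ u) :
    ‖∫ r in a..b, f r‖ ≤ c * ((b - a) ^ (u + 1) / (u + 1)) := by
  have hint : ∫ r in a..b, c * (r - a) ^ u = c * ((b - a) ^ (u + 1) / (u + 1)) := by
    rw [intervalIntegral.integral_const_mul,
      intervalIntegral.integral_comp_sub_right (fun x : ℝ => x ^ u) a, integral_rpow (Or.inl hu),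
      sub_self, Real.zero_rpow (by linarith), sub_zero]
  exact hint ▸ intervalIntegral.norm_integral_le_of_norm_le hab
    (Filter.Eventually.of_forall hbound) ((intervalIntegrable_sub_rpow hu a b a).const_mul c)

lemma memLp_top_of_continuousOn_of_isCompact {X F : Type*} [TopologicalSpace X]
    [MeasurableSpace X] [OpensMeasurableSpace X] [NormedAddCommGroup F]
    [SecondCountableTopologyEither X F] {μ : Measure X} {f : X → F} {s : Set X} (hs : IsCompact s)
    (hs' : MeasurableSet s) (hf : ContinuousOn f s) :
    MemLp f ⊤ (μ.restrict s) := by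
  obtain ⟨M, hM⟩ := hs.exists_bound_of_continuousOn hf
  exact memLp_top_of_bound (hf.aestronglyMeasurable hs') M (ae_restrict_of_forall_mem hs' hM)

lemma lintegral_enorm_sq_lt_top_of_memLp_two {X F : Type*} [MeasurableSpace X]
    [NormedAddCommGroup F] {μ : Measure X} {f : X → F} (hf : MemLp f 2 μ) :
    ∫⁻ x, ‖f x‖ₑ ^ 2 ∂μ < ⊤ := by
  simpa using lintegral_rpow_enorm_lt_top_of_eLpNorm_lt_top two_ne_zero ENNReal.ofNat_ne_top
    hf.eLpNorm_lt_top

lemma aestronglyMeasurable_partial_deriv {X F : Type*} [MeasurableSpace X] [NormedAddCommGroup F]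
    [NormedSpace ℝ F] {μ : Measure (X × ℝ)} {f f' : X → ℝ → F} {S : Set (X × ℝ)}
    (hS : MeasurableSet S) (hf : StronglyMeasurable (Function.uncurry f))
    (hderiv : ∀ q ∈ S, HasDerivAt (f q.1) (f' q.1 q.2) q.2) :
    AEStronglyMeasurable (Function.uncurry f') (μ.restrict S) := by
  refine aestronglyMeasurable_of_tendsto_ae (nhdsWithin (0 : ℝ) {0}ᶜ)
    (f := fun h q => h⁻¹ • (f q.1 (q.2 + h) - f q.1 q.2)) (fun h => ?_)
    (ae_restrict_of_forall_mem hS fun q hq => (hderiv q hq).tendsto_slope_zero)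
  have hshift : StronglyMeasurable fun q : X × ℝ => f q.1 (q.2 + h) :=
    hf.comp_measurable (g := fun q : X × ℝ => (q.1, q.2 + h)) (by fun_prop)
  exact ((hshift.sub hf).const_smul h⁻¹).aestronglyMeasurable

/-- The triangle `a < s < r ≤ b`, on which, for `a = 0` and `b = T`, Condition (A) controls
`∂K(r,s)/∂r`. Points are pairs `(s, r)`, so that the integration variable `r` of `𝒦*` comes
second although it is the first argument of `K`. -/
def volterraTriangle (a b : ℝ) : Set (ℝ × ℝ) := {q | a < q.1 ∧ q.1 < q.2 ∧ q.2 ≤ b}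

lemma measurableSet_volterraTriangle (a b : ℝ) : MeasurableSet (volterraTriangle a b) :=
  (measurableSet_lt measurable_const measurable_fst).inter
    ((measurableSet_lt measurable_fst measurable_snd).inter
      (measurableSet_le measurable_snd measurable_const))

lemma aestronglyMeasurable_integral_of_volterraTriangle {f : ℝ → ℝ → E} {a b : ℝ}
    (hf : AEStronglyMeasurable (Function.uncurry f) (volume.restrict (volterraTriangle a b))) :
    AEStronglyMeasurable (fun s => ∫ r in s..b, f s r) (volume.restrict (Ioo a b)) := by
  have hind := ((aestronglyMeasurable_indicator_iff
    (measurableSet_volterraTriangle a b)).2 hf).integral_prod_right'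
  refine hind.restrict.congr (ae_restrict_of_forall_mem measurableSet_Ioo fun s hs => ?_)
  have hslice : (fun r => (volterraTriangle a b).indicator (Function.uncurry f) (s, r)) =
      (Ioc s b).indicator (f s) := by
    ext r
    simp only [indicator, volterraTriangle, mem_ofPred_eq, hs.1, true_and, mem_Ioc,
      Function.uncurry_apply_pair]
  simp only [hslice, integral_indicator measurableSet_Ioc, intervalIntegral.integral_of_le hs.2.le]

lemma IsHolderWith.continuousOn {F : Type*} [NormedAddCommGroup F] {T lam D : ℝ} {φ : ℝ → F}
    (hφ : IsHolderWith T lam D φ) (hlam : 0 < lam) : ContinuousOn φ (Icc 0 T) := by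
  intro s hs
  have hlim : Filter.Tendsto (fun r => D * |r - s| ^ lam) (nhdsWithin s (Icc 0 T)) (nhds 0) := by
    have hcont : Continuous fun r => D * |r - s| ^ lam :=
      continuous_const.mul ((by fun_prop : Continuous fun r => |r - s|).rpow_const
        fun _ => Or.inr hlam.le)
    simpa [Real.zero_rpow hlam.ne'] using (hcont.tendsto s).mono_left nhdsWithin_le_nhds
  exact tendsto_iff_norm_sub_tendsto_zero.2 <| squeeze_zero' (.of_forall fun _ => norm_nonneg _)
    (Filter.eventually_of_mem self_mem_nhdsWithin fun r hr => hφ r hr s hs) hlim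

section Kernel

variable {T α C lam D : ℝ} {p : ENNReal} {K K' : ℝ → ℝ → ℝ} {φ : ℝ → E}

lemma CondA.memLp_kernel (hA : CondA T α C K K') (hT : 0 < T) (hK : Measurable (K T)) (hp : p ≠ ⊤)
    (hαp : α * p.toReal < 1) : MemLp (K T) p (volume.restrict (Icc 0 T)) := by
  have hweight : MemLp (fun s => (s - 0) ^ (-α) * (T - s) ^ (-α)) p (volume.restrict (Ioo 0 T)) :=
    memLp_sub_rpow_mul_sub_rpow hp (by linarith) (by linarith) hT
  rw [← restrict_Ioo_eq_restrict_Icc]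
  refine hweight.of_le_mul (c := C) hK.aestronglyMeasurable
    (ae_restrict_of_forall_mem measurableSet_Ioo fun s hs => ?_)
  have hnonneg : 0 ≤ s ^ (-α) * (T - s) ^ (-α) :=
    mul_nonneg (Real.rpow_nonneg hs.1.le _) (Real.rpow_nonneg (sub_nonneg.2 hs.2.le) _)
  rw [sub_zero, Real.norm_of_nonneg hnonneg, ← mul_assoc]
  exact hA.1 s T hs.1 hs.2 le_rfl

lemma CondA.norm_deriv_smul_sub_le (hA : CondA T α C K K') (hφ : IsHolderWith T lam D φ) {s r : ℝ}
    (hs : 0 < s) (hr : r ∈ Ioc s T) :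
    ‖K' r s • (φ r - φ s)‖ ≤ C * D * (r - s) ^ (lam - α - 1) := by
  have hsr : 0 < r - s := sub_pos.2 hr.1
  have hK' : |K' r s| ≤ C * (r - s) ^ (-(α + 1)) := (hA.2 s r hs hr.1 hr.2).2
  have hinc : ‖φ r - φ s‖ ≤ D * (r - s) ^ lam := by
    simpa only [abs_of_pos hsr] using
      hφ r ⟨(hs.trans hr.1).le, hr.2⟩ s ⟨hs.le, hr.1.le.trans hr.2⟩
  calc ‖K' r s • (φ r - φ s)‖ = |K' r s| * ‖φ r - φ s‖ := norm_smul _ _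
    _ ≤ C * (r - s) ^ (-(α + 1)) * (D * (r - s) ^ lam) :=
        mul_le_mul hK' hinc (norm_nonneg _) ((abs_nonneg _).trans hK')
    _ = C * D * ((r - s) ^ (-(α + 1)) * (r - s) ^ lam) := by ring
    _ = C * D * (r - s) ^ (lam - α - 1) := by rw [← Real.rpow_add hsr]; ring_nf

lemma CondA.integrableOn_deriv_smul_sub (hA : CondA T α C K K') (hφ : IsHolderWith T lam D φ)
    (hlam : 0 < lam) (hαlam : α < lam) {s : ℝ} (hs : 0 < s) :
    IntegrableOn (fun r => K' r s • (φ r - φ s)) (Ioc s T) := by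
  have hK' : AEStronglyMeasurable (fun r => K' r s) (volume.restrict (Ioc s T)) :=
    (stronglyMeasurable_deriv fun r => K r s).aestronglyMeasurable.congr <|
      ae_restrict_of_forall_mem measurableSet_Ioc fun r hr => (hA.2 s r hs hr.1 hr.2).1.deriv
  have hφ' : AEStronglyMeasurable φ (volume.restrict (Ioc s T)) :=
    ((hφ.continuousOn hlam).mono fun r hr => ⟨(hs.trans hr.1).le, hr.2⟩).aestronglyMeasurable
      measurableSet_Ioc
  exact integrableOn_of_norm_le_sub_rpow (by linarith)
    (hK'.smul (hφ'.sub aestronglyMeasurable_const)) fun r hr => hA.norm_deriv_smul_sub_le hφ hs hr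

lemma CondA.norm_AK_le (hA : CondA T α C K K') (hφ : IsHolderWith T lam D φ) (hαlam : α < lam)
    {s : ℝ} (hs : s ∈ Ioo 0 T) :
    ‖AK T K' φ s‖ ≤ |C * D| * (T ^ (lam - α) / (lam - α)) := by
  have hβ : 0 < lam - α := sub_pos.2 hαlam
  have hpow : (T - s) ^ (lam - α) ≤ T ^ (lam - α) :=
    Real.rpow_le_rpow (sub_nonneg.2 hs.2.le) (by linarith [hs.1]) hβ.le
  have hnonneg : 0 ≤ (T - s) ^ (lam - α) := Real.rpow_nonneg (sub_nonneg.2 hs.2.le) _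
  calc ‖AK T K' φ s‖ ≤ C * D * ((T - s) ^ (lam - α - 1 + 1) / (lam - α - 1 + 1)) :=
        norm_integral_le_of_norm_le_sub_rpow (by linarith) hs.2.le
          fun r hr => hA.norm_deriv_smul_sub_le hφ hs.1 hr
    _ = C * D * ((T - s) ^ (lam - α) / (lam - α)) := by rw [sub_add_cancel]
    _ ≤ |C * D| * (T ^ (lam - α) / (lam - α)) :=
        mul_le_mul (le_abs_self _) (div_le_div_of_nonneg_right hpow hβ.le)
          (div_nonneg hnonneg hβ.le) (abs_nonneg _)

lemma CondA.aestronglyMeasurable_AK (hA : CondA T α C K K')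
    (hK : Measurable (Function.uncurry K)) (hφ : ContinuousOn φ (Icc 0 T)) :
    AEStronglyMeasurable (AK T K' φ) (volume.restrict (Ioo 0 T)) := by
  have htriangle := measurableSet_volterraTriangle 0 T
  have hK' : AEStronglyMeasurable (fun q : ℝ × ℝ => K' q.2 q.1)
      (volume.restrict (volterraTriangle 0 T)) :=
    aestronglyMeasurable_partial_deriv (f := fun s r => K r s) (f' := fun s r => K' r s) htriangle
      (hK.comp measurable_swap).stronglyMeasurable
      fun q hq => (hA.2 q.1 q.2 hq.1 hq.2.1 hq.2.2).1
  have hinc : ContinuousOn (fun q : ℝ × ℝ => φ q.2 - φ q.1) (volterraTriangle 0 T) :=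
    (hφ.comp continuousOn_snd fun _ hq => ⟨(hq.1.trans hq.2.1).le, hq.2.2⟩).sub
      (hφ.comp continuousOn_fst fun _ hq => ⟨hq.1.le, hq.2.1.le.trans hq.2.2⟩)
  exact aestronglyMeasurable_integral_of_volterraTriangle
    (hK'.smul (hinc.aestronglyMeasurable htriangle))

lemma CondA.memLp_AK (hA : CondA T α C K K') (hK : Measurable (Function.uncurry K))
    (hφ : IsHolderWith T lam D φ) (hlam : 0 < lam) (hαlam : α < lam) :
    MemLp (AK T K' φ) p (volume.restrict (Icc 0 T)) := by
  rw [← restrict_Ioo_eq_restrict_Icc]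
  exact .of_bound (hA.aestronglyMeasurable_AK hK (hφ.continuousOn hlam)) _
    (ae_restrict_of_forall_mem measurableSet_Ioo fun s hs => hA.norm_AK_le hφ hαlam hs)

lemma CondA.memLp_Kstar (hA : CondA T α C K K') (hT : 0 < T) (hK : Measurable (Function.uncurry K))
    (hφ : IsHolderWith T lam D φ) (hlam : 0 < lam) (hαlam : α < lam) (hp : p ≠ ⊤)
    (hαp : α * p.toReal < 1) : MemLp (Kstar T K K' φ) p (volume.restrict (Icc 0 T)) := by
  have hKT : MemLp (K T) p (volume.restrict (Icc 0 T)) :=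
    hA.memLp_kernel hT hK.of_uncurry_left hp hαp
  have hφ_top : MemLp φ ⊤ (volume.restrict (Icc 0 T)) :=
    memLp_top_of_continuousOn_of_isCompact isCompact_Icc measurableSet_Icc (hφ.continuousOn hlam)
  exact (hφ_top.smul hKT).add (hA.memLp_AK hK hφ hlam hαlam)

end Kernel

theorem kstar_mem_L2_general {E : Type*} [NormedAddCommGroup E] [NormedSpace ℝ E] [CompleteSpace E]
    {T α lam : ℝ} {p : ENNReal} (hT : 0 < T) (hp : p ≠ ⊤) (hαp : α * p.toReal < 1)
    {K K' : ℝ → ℝ → ℝ} (hK : Measurable (Function.uncurry K)) (hA : ∃ C : ℝ, CondA T α C K K')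
    {φ : ℝ → E} (hlam : 0 < lam) (hφ : IsHolder T lam φ) (hαlam : α < lam) :
    (∀ s ∈ Ioo (0 : ℝ) T, IntegrableOn (fun r => K' r s • (φ r - φ s)) (Ioc s T)) ∧
    MemLp (Kstar T K K' φ) p (volume.restrict (Icc 0 T)) := by
  obtain ⟨C, hA⟩ := hA
  obtain ⟨D, hφ⟩ := hφ
  exact ⟨fun s hs => hA.integrableOn_deriv_smul_sub hφ hlam hαlam hs.1,
    hA.memLp_Kstar hT hK hφ hlam hαlam hp hαp⟩

/-- for `λ`-Hölder `φ` with `λ > α`, the integral defining `𝒦*φ`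
converges absolutely on `(0,T)` and `𝒦*φ ∈ L²([0,T]; E)`. -/
theorem kstar_mem_L2 {E : Type*} [NormedAddCommGroup E] [NormedSpace ℝ E] [CompleteSpace E]
    (T α lam : ℝ) (hT : 0 < T) (hα : 0 ≤ α) (hα' : α < 1 / 4)
    (K K' : ℝ → ℝ → ℝ) (hK : IsVolterraKernel K) (hA : ∃ C : ℝ, CondA T α C K K')
    (φ : ℝ → E) (hlam : 0 < lam) (hlam' : lam ≤ 1)
    (hφ : IsHolder T lam φ) (hαlam : α < lam) :
    (∀ s ∈ Ioo (0:ℝ) T,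
      (∫⁻ r in Ioc s T, (‖K' r s • (φ r - φ s)‖₊ : ENNReal)) < ⊤) ∧
    (∫⁻ s in Icc (0:ℝ) T, (‖Kstar T K K' φ s‖₊ : ENNReal) ^ 2) < ⊤ := by
  have hα2 : α * (2 : ENNReal).toReal < 1 := by rw [ENNReal.toReal_ofNat]; linarith
  obtain ⟨hint, hLp⟩ :=
    kstar_mem_L2_general hT ENNReal.ofNat_ne_top hα2 hK.1 hA hlam hφ hαlam
  exact ⟨fun s hs => (hint s hs).2, lintegral_enorm_sq_lt_top_of_memLp_two hLp⟩

end YS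
end
end

section
/- Let T > 0, let K be a Volterra kernel on [0,T] satisfying Condition (A) with exponent α ∈ [0, 1/4), such that for each s ∈ (0,T) and each a with s < a ≤ T one has K(T,s) − K(a,s) = ∫_a^T (∂K(r,s)/∂r) dr, and let R(s,t) := ∫_0^{min(s,t)} K(t,r) K(s,r) dr. Let φ: [0,T]² → ℝ be bounded, let π = {(u_i, v_j)} be a grid partition of [0,T]², and let φ^π(u,v) := Σ_{i,j} φ(u_i,v_j) 1_{[u_i,u_{i+1})}(u) 1_{[v_j,v_{j+1})}(v). Then the Riemann–Stieltjes sum satisfies Σ_{i,j} φ(u_i,v_j) R(u_i,u_{i+1}; v_j,v_{j+1}) = ∫_0^T (K*⊗K*)φ^π(r,r) dr. -/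
open MeasureTheory Set

noncomputable section

namespace YS

variable {E : Type*} [NormedAddCommGroup E] [NormedSpace ℝ E]

/-!
The operator `𝒦*` maps `1_{[a,b)}` to `K(b,·) − K(a,·)`: this is the fundamental theorem of calculus
for `r ↦ K(r,s)`, whose singularity at `r = s` is cancelled by the increment `φ(r) − φ(s)`.
Moreover `𝒦* ⊗ 𝒦*` is `𝒦*` applied in one variable and then in the other, so it maps
`1_{[a,b)} ⊗ 1_{[c,d)}` to the product of the two differences. Integrated over the diagonal, this
product gives the rectangular increment of `R`, because `R(s,t)` is the `L²(0,T)` inner product of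
`K(s,·)` and `K(t,·)`.
-/

section OneVariable

variable {T s : ℝ} {K K' : ℝ → ℝ → ℝ} {ι : Type*} {I : Finset ι}

/-- Integrability of the integrand in `AK T K' φ s`; without it that integral is `0` by convention,
and `AK` is not additive. -/
def AKIntegrable (T : ℝ) (K' : ℝ → ℝ → ℝ) (φ : ℝ → E) (s : ℝ) : Prop :=
  IntervalIntegrable (fun r => K' r s • (φ r - φ s)) volume s T

lemma AKIntegrable.const_smul {φ : ℝ → E} (h : AKIntegrable T K' φ s) (c : ℝ) :
    AKIntegrable T K' (fun r => c • φ r) s := by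
  simpa only [AKIntegrable, Pi.smul_def, smul_sub, smul_comm c] using IntervalIntegrable.smul h c

lemma ak_const_smul (φ : ℝ → E) (c : ℝ) :
    AK T K' (fun r => c • φ r) s = c • AK T K' φ s := by
  simp only [AK, ← intervalIntegral.integral_smul, smul_sub, smul_comm c]

lemma ak_add {φ ψ : ℝ → E} (hφ : AKIntegrable T K' φ s) (hψ : AKIntegrable T K' ψ s) :
    AK T K' (fun r => φ r + ψ r) s = AK T K' φ s + AK T K' ψ s := by
  simp only [AK, ← intervalIntegral.integral_add hφ hψ, ← smul_add, add_sub_add_comm]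

lemma AKIntegrable.sub {φ ψ : ℝ → E} (hφ : AKIntegrable T K' φ s) (hψ : AKIntegrable T K' ψ s) :
    AKIntegrable T K' (fun r => φ r - ψ r) s := by
  simpa only [AKIntegrable, Pi.sub_def, ← smul_sub, sub_sub_sub_comm] using
    IntervalIntegrable.sub hφ hψ

lemma ak_sub {φ ψ : ℝ → E} (hφ : AKIntegrable T K' φ s) (hψ : AKIntegrable T K' ψ s) :
    AK T K' (fun r => φ r - ψ r) s = AK T K' φ s - AK T K' ψ s := by
  simp only [AK, ← intervalIntegral.integral_sub hφ hψ, ← smul_sub, sub_sub_sub_comm]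

lemma kstar_sub {φ ψ : ℝ → E} (hφ : AKIntegrable T K' φ s) (hψ : AKIntegrable T K' ψ s) :
    Kstar T K K' (fun r => φ r - ψ r) s = Kstar T K K' φ s - Kstar T K K' ψ s := by
  change K T s • (φ s - ψ s) + AK T K' _ s =
    (K T s • φ s + AK T K' φ s) - (K T s • ψ s + AK T K' ψ s)
  rw [ak_sub hφ hψ, smul_sub, add_sub_add_comm]

lemma ak_integrand_sum_smul (f : ι → ℝ → ℝ) (c : ι → E) (r : ℝ) :
    K' r s • (∑ i ∈ I, f i r • c i - ∑ i ∈ I, f i s • c i) =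
      ∑ i ∈ I, (K' r s • (f i r - f i s)) • c i := by
  simp only [← Finset.sum_sub_distrib, ← sub_smul, Finset.smul_sum, smul_assoc]

lemma AKIntegrable.sum_smul {f : ι → ℝ → ℝ} (h : ∀ i ∈ I, AKIntegrable T K' (f i) s)
    (c : ι → E) : AKIntegrable T K' (fun r => ∑ i ∈ I, f i r • c i) s := by
  simp only [AKIntegrable, ak_integrand_sum_smul]
  simpa only [Finset.sum_fn] using
    IntervalIntegrable.sum I fun i hi => (h i hi).smul_continuousOn continuousOn_const

variable [CompleteSpace E]

lemma ak_sum_smul {f : ι → ℝ → ℝ} (h : ∀ i ∈ I, AKIntegrable T K' (f i) s) (c : ι → E) :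
    AK T K' (fun r => ∑ i ∈ I, f i r • c i) s = ∑ i ∈ I, AK T K' (f i) s • c i := by
  simp only [AK, ak_integrand_sum_smul]
  rw [intervalIntegral.integral_finsetSum
    fun i hi => (h i hi).smul_continuousOn continuousOn_const]
  simp only [intervalIntegral.integral_smul_const]

lemma kstar_sum_smul {f : ι → ℝ → ℝ} (h : ∀ i ∈ I, AKIntegrable T K' (f i) s) (c : ι → E) :
    Kstar T K K' (fun r => ∑ i ∈ I, f i r • c i) s = ∑ i ∈ I, Kstar T K K' (f i) s • c i := by
  change K T s • _ + AK T K' _ s = ∑ i ∈ I, (K T s • f i s + AK T K' (f i) s) • c i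
  simp only [ak_sum_smul h, Finset.smul_sum, ← Finset.sum_add_distrib, add_smul, smul_assoc]

end OneVariable

section TwoVariables

variable {T u v : ℝ} {K K' : ℝ → ℝ → ℝ} {ψ : ℝ → ℝ → E}

lemma bk_eq_ak_ak (hψ : ∀ y, AKIntegrable T K' (fun x => ψ x y) u) :
    BK T K' ψ u v = AK T K' (fun y => AK T K' (fun x => ψ x y) u) v := by
  unfold BK
  rw [AK]
  refine intervalIntegral.integral_congr fun y _ => ?_
  rw [← ak_sub (hψ y) (hψ v), AK, ← intervalIntegral.integral_smul]
  refine intervalIntegral.integral_congr fun x _ => ?_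
  simp only [rectInc, smul_smul, mul_comm (K' x u)]
  congr 1
  abel

lemma kstarT_eq_kstar_kstar (hx : ∀ y, AKIntegrable T K' (fun x => ψ x y) u)
    (hy : AKIntegrable T K' (fun y => ψ u y) v)
    (hxy : AKIntegrable T K' (fun y => AK T K' (fun x => ψ x y) u) v) :
    KstarT T K K' ψ u v = Kstar T K K' (fun y => Kstar T K K' (fun x => ψ x y) u) v := by
  change _ = K T v • (K T u • ψ u v + AK T K' (fun x => ψ x v) u) +
    AK T K' (fun y => K T u • ψ u y + AK T K' (fun x => ψ x y) u) v
  rw [ak_add (hy.const_smul _) hxy, ak_const_smul, ← bk_eq_ak_ak hx, KstarT, smul_add, smul_smul,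
    mul_comm (K T u)]
  abel

theorem kstarT_sum_smul [CompleteSpace E] {ι : Type*} {I : Finset ι} {f g : ι → ℝ → ℝ}
    (hf : ∀ i ∈ I, AKIntegrable T K' (f i) u) (hg : ∀ i ∈ I, AKIntegrable T K' (g i) v)
    (c : ι → E) :
    KstarT T K K' (fun x y => ∑ i ∈ I, (f i x * g i y) • c i) u v =
      ∑ i ∈ I, (Kstar T K K' (f i) u * Kstar T K K' (g i) v) • c i := by
  simp only [mul_smul]
  rw [kstarT_eq_kstar_kstar (fun y => .sum_smul hf _)]
  · simp only [kstar_sum_smul hf]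
    simp only [smul_comm (Kstar T K K' (f _) u), kstar_sum_smul hg]
  · simpa only [smul_comm (g _ _)] using AKIntegrable.sum_smul hg fun i => f i u • c i
  · simp only [ak_sum_smul hf]
    simpa only [smul_comm (g _ _)] using AKIntegrable.sum_smul hg fun i => AK T K' (f i) u • c i

end TwoVariables

section Indicator

variable {T s a b c : ℝ} {K K' : ℝ → ℝ → ℝ}

lemma ak_integrand_indicator_Ici_eqOn_zero (hcs : c ≤ s) (hsT : s ≤ T) :
    EqOn (fun r => K' r s • ((Ici c).indicator (1 : ℝ → ℝ) r - (Ici c).indicator 1 s)) 0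
      (uIcc s T) := by
  intro r hr
  rw [uIcc_of_le hsT] at hr
  simp [hcs, hcs.trans hr.1]

lemma ak_integrand_indicator_Ici_of_lt (hsc : s < c) :
    (fun r => K' r s • ((Ici c).indicator (1 : ℝ → ℝ) r - (Ici c).indicator 1 s)) =
      (Ici c).indicator fun r => K' r s := by
  ext r
  by_cases hr : c ≤ r <;> simp [hr, hsc]

lemma Ioc_inter_Ici_of_lt (hsc : s < c) : Ioc s T ∩ Ici c = Icc c T := by
  grind

lemma akIntegrable_indicator_Ici (hsT : s ≤ T) (hcT : c ≤ T)
    (hK' : s < c → IntervalIntegrable (fun r => K' r s) volume c T) :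
    AKIntegrable T K' ((Ici c).indicator (1 : ℝ → ℝ)) s := by
  rw [AKIntegrable]
  rcases le_or_gt c s with hcs | hsc
  · exact (IntervalIntegrable.zero ..).congr
      ((ak_integrand_indicator_Ici_eqOn_zero hcs hsT).symm.mono uIoc_subset_uIcc)
  · rw [ak_integrand_indicator_Ici_of_lt hsc, intervalIntegrable_iff_integrableOn_Ioc_of_le hsT,
      IntegrableOn, integrable_indicator_iff measurableSet_Ici, IntegrableOn,
      Measure.restrict_restrict measurableSet_Ici, inter_comm, Ioc_inter_Ici_of_lt hsc]
    exact (intervalIntegrable_iff_integrableOn_Icc_of_le hcT).mp (hK' hsc)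

lemma kstar_indicator_Ici (hsT : s ≤ T) (hcT : c ≤ T) (hK : c ≤ s → K c s = 0)
    (hFTC : s < c → K T s - K c s = ∫ r in c..T, K' r s) :
    Kstar T K K' ((Ici c).indicator (1 : ℝ → ℝ)) s = K T s - K c s := by
  rw [Kstar]
  rcases le_or_gt c s with hcs | hsc
  · rw [intervalIntegral.integral_congr (ak_integrand_indicator_Ici_eqOn_zero hcs hsT)]
    simp [hcs, hK hcs]
  · rw [ak_integrand_indicator_Ici_of_lt hsc, intervalIntegral.integral_of_le hsT,
      setIntegral_indicator measurableSet_Ici, Ioc_inter_Ici_of_lt hsc,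
      integral_Icc_eq_integral_Ioc, ← intervalIntegral.integral_of_le hcT, ← hFTC hsc]
    simp [hsc]

lemma indicator_Ico_one_eq_sub (hab : a ≤ b) :
    (Ico a b).indicator (1 : ℝ → ℝ) =
      fun r => (Ici a).indicator 1 r - (Ici b).indicator 1 r := by
  ext r
  rw [← Ici_sdiff_Ici, indicator_sdiff (Ici_subset_Ici.mpr hab), Pi.sub_apply]

lemma akIntegrable_indicator_Ico (hsT : s ≤ T) (hab : a ≤ b) (hbT : b ≤ T)
    (hK' : ∀ c, s < c → c ≤ T → IntervalIntegrable (fun r => K' r s) volume c T) :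
    AKIntegrable T K' ((Ico a b).indicator (1 : ℝ → ℝ)) s := by
  have haT := hab.trans hbT
  rw [indicator_Ico_one_eq_sub hab]
  exact (akIntegrable_indicator_Ici hsT haT fun h => hK' a h haT).sub
    (akIntegrable_indicator_Ici hsT hbT fun h => hK' b h hbT)

theorem kstar_indicator_Ico (hsT : s ≤ T) (hab : a ≤ b) (hbT : b ≤ T)
    (hK : ∀ c ≤ s, K c s = 0)
    (hK' : ∀ c, s < c → c ≤ T → IntervalIntegrable (fun r => K' r s) volume c T)
    (hFTC : ∀ c, s < c → c ≤ T → K T s - K c s = ∫ r in c..T, K' r s) :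
    Kstar T K K' ((Ico a b).indicator (1 : ℝ → ℝ)) s = K b s - K a s := by
  have haT := hab.trans hbT
  have ha := kstar_indicator_Ici hsT haT (hK a) fun h => hFTC a h haT
  have hb := kstar_indicator_Ici hsT hbT (hK b) fun h => hFTC b h hbT
  rw [indicator_Ico_one_eq_sub hab,
    kstar_sub (akIntegrable_indicator_Ici hsT haT fun h => hK' a h haT)
      (akIntegrable_indicator_Ici hsT hbT fun h => hK' b h hbT), ha, hb, sub_sub_sub_cancel_left]

end Indicator

section Grid

variable {T : ℝ}

lemma Partition.pts_monotoneOn (P : Partition T) : MonotoneOn P.pts (Iic P.n) :=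
  monotoneOn_of_le_add_one ordConnected_Iic fun i _ _ hi => (P.lt i hi).le

lemma Partition.pts_mem_Icc (P : Partition T) {i : ℕ} (hi : i ≤ P.n) : P.pts i ∈ Icc 0 T :=
  ⟨P.first.ge.trans (P.pts_monotoneOn (Nat.zero_le _) hi (Nat.zero_le i)),
    (P.pts_monotoneOn hi self_mem_Iic hi).trans P.last.le⟩

lemma step2_eq_sum_smul (P Q : Partition T) (ψ : ℝ → ℝ → E) :
    step2 P Q ψ = fun u v => ∑ p ∈ Finset.range P.n ×ˢ Finset.range Q.n,
      ((Ico (P.pts p.1) (P.pts (p.1 + 1))).indicator (1 : ℝ → ℝ) u *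
        (Ico (Q.pts p.2) (Q.pts (p.2 + 1))).indicator (1 : ℝ → ℝ) v) •
          ψ (P.pts p.1) (Q.pts p.2) := by
  ext u v
  simp only [step2, Finset.sum_product, ← indicator_prod_one,
    ← indicator_smul_const_apply (_ ×ˢ _) 1, Pi.one_apply, one_smul]

theorem kstarT_step2 [CompleteSpace E] {K K' : ℝ → ℝ → ℝ} {s : ℝ} (hsT : s ≤ T)
    (hK : ∀ c ≤ s, K c s = 0)
    (hK' : ∀ c, s < c → c ≤ T → IntervalIntegrable (fun r => K' r s) volume c T)
    (hFTC : ∀ c, s < c → c ≤ T → K T s - K c s = ∫ r in c..T, K' r s)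
    (P Q : Partition T) (ψ : ℝ → ℝ → E) :
    KstarT T K K' (step2 P Q ψ) s s = ∑ p ∈ Finset.range P.n ×ˢ Finset.range Q.n,
      ((K (P.pts (p.1 + 1)) s - K (P.pts p.1) s) * (K (Q.pts (p.2 + 1)) s - K (Q.pts p.2) s)) •
        ψ (P.pts p.1) (Q.pts p.2) := by
  have hint (R : Partition T) (i : ℕ) (hi : i < R.n) :=
    akIntegrable_indicator_Ico hsT (R.lt i hi).le (R.pts_mem_Icc hi).2 hK'
  have hcell (R : Partition T) (i : ℕ) (hi : i < R.n) :=
    kstar_indicator_Ico hsT (R.lt i hi).le (R.pts_mem_Icc hi).2 hK hK' hFTC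
  have hlt {p : ℕ × ℕ} (hp : p ∈ Finset.range P.n ×ˢ Finset.range Q.n) : p.1 < P.n ∧ p.2 < Q.n := by
    simpa using hp
  rw [step2_eq_sum_smul, kstarT_sum_smul (fun p hp => hint P p.1 (hlt hp).1)
    fun p hp => hint Q p.2 (hlt hp).2]
  exact Finset.sum_congr rfl fun p hp => by rw [hcell P p.1 (hlt hp).1, hcell Q p.2 (hlt hp).2]

end Grid

section Covariance

variable {T : ℝ} {K : ℝ → ℝ → ℝ}

lemma covR_eq_integral (hK : ∀ t s, t ≤ s → K t s = 0) {s t : ℝ} (hs : s ∈ Icc 0 T)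
    (ht : t ∈ Icc 0 T) : covR K s t = ∫ r in (0 : ℝ)..T, K t r * K s r := by
  rw [covR, intervalIntegral.integral_of_le (le_min hs.1 ht.1),
    intervalIntegral.integral_of_le (hs.1.trans hs.2)]
  refine (setIntegral_eq_of_subset_of_forall_sdiff_eq_zero measurableSet_Ioc
    (Ioc_subset_Ioc_right (min_le_of_left_le hs.2)) fun r hr => ?_).symm
  have hr' : s < r ∨ t < r := by grind
  rcases hr' with h | h <;> simp [hK _ _ h.le]

lemma intervalIntegrable_mul_of_memLp_two {f g : ℝ → ℝ} {a b : ℝ} (hab : a ≤ b)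
    (hf : MemLp f 2 (volume.restrict (Ioc a b))) (hg : MemLp g 2 (volume.restrict (Ioc a b))) :
    IntervalIntegrable (fun r => f r * g r) volume a b :=
  (intervalIntegrable_iff_integrableOn_Ioc_of_le hab).mpr (hf.integrable_mul hg)

theorem rectInc_covR (hK : ∀ t s, t ≤ s → K t s = 0)
    (hL2 : ∀ t ∈ Icc 0 T, MemLp (K t) 2 (volume.restrict (Ioc 0 T))) {a b c d : ℝ}
    (ha : a ∈ Icc 0 T) (hb : b ∈ Icc 0 T) (hc : c ∈ Icc 0 T) (hd : d ∈ Icc 0 T) :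
    rectInc (covR K) a b c d = ∫ r in (0 : ℝ)..T, (K b r - K a r) * (K d r - K c r) := by
  have hint {s t : ℝ} (hs : s ∈ Icc 0 T) (ht : t ∈ Icc 0 T) :=
    intervalIntegrable_mul_of_memLp_two (hs.1.trans hs.2) (hL2 t ht) (hL2 s hs)
  rw [rectInc, covR_eq_integral hK ha hc, covR_eq_integral hK hb hd, covR_eq_integral hK ha hd,
    covR_eq_integral hK hb hc, ← intervalIntegral.integral_add (hint ha hc) (hint hb hd),
    ← intervalIntegral.integral_sub ((hint ha hc).add (hint hb hd)) (hint ha hd),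
    ← intervalIntegral.integral_sub (((hint ha hc).add (hint hb hd)).sub (hint ha hd)) (hint hb hc)]
  congr! 2
  ring

end Covariance

section ConditionA

variable {T α C : ℝ} {K K' : ℝ → ℝ → ℝ}

lemma intervalIntegrable_rpow_mul_sub_rpow {p q t : ℝ} (hp : -1 < p) (hq : -1 < q) (ht : 0 ≤ t) :
    IntervalIntegrable (fun r => r ^ p * (t - r) ^ q) volume 0 t := by
  have left_half {p q : ℝ} (hp : -1 < p) :
      IntervalIntegrable (fun r => r ^ p * (t - r) ^ q) volume 0 (t / 2) := by
    rcases ht.eq_or_lt with rfl | ht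
    · simp
    · refine (intervalIntegral.intervalIntegrable_rpow' hp).mul_continuousOn ?_
      refine ContinuousOn.rpow_const (by fun_prop) fun r hr => .inl ?_
      rw [uIcc_of_le (by positivity)] at hr
      linarith [hr.2]
  refine (left_half hp).trans ?_
  convert ((left_half (p := q) (q := p) hq).comp_sub_left t).symm using 2 with r
  · rw [sub_sub_cancel, mul_comm]
  · ring
  · ring

lemma CondA.sq_le (hA : CondA T α C K K') {s t : ℝ} (hs : 0 < s) (hst : s < t) (htT : t ≤ T) :
    K t s ^ 2 ≤ C ^ 2 * (s ^ (-(2 * α)) * (t - s) ^ (-(2 * α))) := by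
  have rpow_sq {x : ℝ} (hx : 0 < x) : x ^ (-(2 * α)) = (x ^ (-α)) ^ 2 := by
    rw [← Real.rpow_mul_natCast hx.le]
    ring_nf
  calc K t s ^ 2 ≤ (C * s ^ (-α) * (t - s) ^ (-α)) ^ 2 := by
        rw [← sq_abs]
        gcongr
        exact hA.1 s t hs hst htT
    _ = C ^ 2 * (s ^ (-(2 * α)) * (t - s) ^ (-(2 * α))) := by
        rw [rpow_sq hs, rpow_sq (sub_pos.mpr hst)]
        ring

lemma CondA.memLp_two (hA : CondA T α C K K') (hα : α < 1 / 2) (hK : IsVolterraKernel K) {t : ℝ}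
    (ht : t ∈ Icc 0 T) : MemLp (K t) 2 (volume.restrict (Ioc 0 T)) := by
  have hmeas : Measurable (K t) := hK.1.of_uncurry_left
  rw [memLp_two_iff_integrable_sq hmeas.aestronglyMeasurable]
  suffices h : IntegrableOn (fun r => K t r ^ 2) (Ioo 0 t) by
    refine h.of_forall_sdiff_eq_zero measurableSet_Ioc fun r hr => ?_
    simp [hK.2 t r (by grind)]
  have hbound := (intervalIntegrable_iff_integrableOn_Ioo_of_le ht.1).mp
    (intervalIntegrable_rpow_mul_sub_rpow (p := -(2 * α)) (q := -(2 * α)) (by linarith)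
      (by linarith) ht.1)
  refine Integrable.mono' (hbound.const_mul (C ^ 2)) (hmeas.pow_const 2).aestronglyMeasurable ?_
  filter_upwards [ae_restrict_mem measurableSet_Ioo] with r hr
  simpa using hA.sq_le hr.1 hr.2 ht.2

lemma CondA.intervalIntegrable_deriv (hA : CondA T α C K K') {s c : ℝ} (hs : 0 < s) (hsc : s < c)
    (hcT : c ≤ T) : IntervalIntegrable (fun r => K' r s) volume c T := by
  have hbound : IntervalIntegrable (fun r => C * (r - s) ^ (-(α + 1))) volume c T := by
    refine ContinuousOn.intervalIntegrable (.const_mul (.rpow_const (by fun_prop) ?_) _)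
    intro r hr
    rw [uIcc_of_le hcT] at hr
    exact .inl (sub_pos.mpr (hsc.trans_le hr.1)).ne'
  have hderiv (r : ℝ) (hr : r ∈ uIoc c T) := by
    rw [uIoc_of_le hcT] at hr
    exact hA.2 s r hs (hsc.trans hr.1) hr.2
  refine hbound.mono_fun' ?_ ?_
  · refine (measurable_deriv fun r => K r s).aestronglyMeasurable.congr ?_
    filter_upwards [ae_restrict_mem measurableSet_uIoc] with r hr
    exact (hderiv r hr).1.deriv
  · filter_upwards [ae_restrict_mem measurableSet_uIoc] with r hr
    exact (hderiv r hr).2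

end ConditionA

theorem RSsum_eq_integral_kstarT_step2_general [CompleteSpace E] {T : ℝ} {K K' : ℝ → ℝ → ℝ}
    (hK : ∀ t s, t ≤ s → K t s = 0)
    (hL2 : ∀ t ∈ Icc 0 T, MemLp (K t) 2 (volume.restrict (Ioc 0 T)))
    (hK' : ∀ s a, 0 < s → s < a → a ≤ T → IntervalIntegrable (fun r => K' r s) volume a T)
    (hFTC : ∀ s a, 0 < s → s < a → a ≤ T → K T s - K a s = ∫ r in a..T, K' r s)
    (φ : ℝ → ℝ → E) (P Q : Partition T) :
    ∑ i ∈ Finset.range P.n, ∑ j ∈ Finset.range Q.n,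
        rectInc (covR K) (P.pts i) (P.pts (i + 1)) (Q.pts j) (Q.pts (j + 1)) •
          φ (P.pts i) (Q.pts j) =
      ∫ r in (0 : ℝ)..T, KstarT T K K' (step2 P Q φ) r r := by
  have hT : 0 ≤ T := P.last ▸ (P.pts_mem_Icc le_rfl).1
  have hint (i j : ℕ) (hi : i < P.n) (hj : j < Q.n) : IntervalIntegrable
      (fun r => (K (P.pts (i + 1)) r - K (P.pts i) r) * (K (Q.pts (j + 1)) r - K (Q.pts j) r))
      volume 0 T :=
    intervalIntegrable_mul_of_memLp_two hT
      ((hL2 _ (P.pts_mem_Icc hi)).sub (hL2 _ (P.pts_mem_Icc hi.le)))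
      ((hL2 _ (Q.pts_mem_Icc hj)).sub (hL2 _ (Q.pts_mem_Icc hj.le)))
  rw [intervalIntegral.integral_of_le hT, integral_Ioc_eq_integral_Ioo,
    setIntegral_congr_fun measurableSet_Ioo fun r hr =>
      kstarT_step2 hr.2.le (hK · r) (hK' r · hr.1) (hFTC r · hr.1) P Q φ,
    ← integral_Ioc_eq_integral_Ioo, ← intervalIntegral.integral_of_le hT,
    intervalIntegral.integral_finsetSum, Finset.sum_product]
  · refine Finset.sum_congr rfl fun i hi => Finset.sum_congr rfl fun j hj => ?_
    rw [Finset.mem_range] at hi hj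
    rw [intervalIntegral.integral_smul_const, rectInc_covR hK hL2 (P.pts_mem_Icc hi.le)
      (P.pts_mem_Icc hi) (Q.pts_mem_Icc hj.le) (Q.pts_mem_Icc hj)]
  · intro p hp
    rw [Finset.mem_product, Finset.mem_range, Finset.mem_range] at hp
    exact (hint p.1 p.2 hp.1 hp.2).smul_continuousOn continuousOn_const

/-- identity (4.4): for a bounded `φ` and any grid partition, the
Riemann–Stieltjes sum against `R` equals `∫_0^T (𝒦*⊗𝒦*)φ^π(r,r) dr`. -/
theorem RSsum_eq_integral_kstarT_step2 (T α : ℝ) (hT : 0 < T) (hα : 0 ≤ α) (hα' : α < 1 / 4)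
    (K K' : ℝ → ℝ → ℝ) (hK : IsVolterraKernel K) (hA : ∃ C : ℝ, CondA T α C K K')
    (hFTC : ∀ s a : ℝ, 0 < s → s < a → a ≤ T → K T s - K a s = ∫ r in a..T, K' r s)
    (φ : ℝ → ℝ → ℝ) (hφ : ∃ M : ℝ, ∀ u v : ℝ, |φ u v| ≤ M)
    (P Q : Partition T) :
    RSsum P Q φ (covR K) = ∫ r in (0:ℝ)..T, KstarT T K K' (step2 P Q φ) r r := by
  obtain ⟨C, hA⟩ := hA
  simpa only [RSsum, smul_eq_mul, mul_comm] using RSsum_eq_integral_kstarT_step2_general hK.2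
    (fun _ => hA.memLp_two (by linarith) hK) (fun _ _ => hA.intervalIntegrable_deriv) hFTC φ P Q

end YS
end
end
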